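/- arXiv:1504.06807 — 4 statements merged into one kernel-verified Lean document; each statement's English description precedes it below -/
import Mathlib

section
/- (Schützenberger) For every nonempty alphabet A, every finite coloring φ : A⁺ → C, and every infinite word x over A, there exists a suffix of x which admits a φ-monochromatic factorization. -/
/-- The first `n` letters of the infinite word `x`, as a finite word. -/
def wordTake {A : Type*} (x : ℕ → A) (n : ℕ) : List A := (List.range n).map x

/-- The finite word `u` is a prefix of the infinite word `x`. -/
def IsPrefixOf {A : Type*} (u : List A) (x : ℕ → A) : Prop := u = wordTake x u.length

/-- The finite word `u` is a (nonempty) factor of the infinite word `x`. -/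
def IsFactorOf {A : Type*} (u : List A) (x : ℕ → A) : Prop :=
  u ≠ [] ∧ ∃ i : ℕ, u = (List.range u.length).map fun k => x (i + k)

/-- `V 0, V 1, V 2, …` is a factorization of the infinite word `x` into nonempty blocks,
i.e. each finite concatenation `V 0 ++ ⋯ ++ V (n-1)` is a prefix of `x`. -/
def IsFactorization {A : Type*} (x : ℕ → A) (V : ℕ → List A) : Prop :=
  (∀ i, V i ≠ []) ∧ ∀ n : ℕ, IsPrefixOf (((List.range n).map V).flatten) x

/-- The concatenation `V i ++ V (i+1) ++ ⋯ ++ V (i+j)` of consecutive blocks. -/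
def blockConcat {A : Type*} (V : ℕ → List A) (i j : ℕ) : List A :=
  ((List.range (j + 1)).map fun t => V (i + t)).flatten

/-- The concatenation `V (n (σ 0)) ++ V (n (σ 1)) ++ ⋯ ++ V (n (σ (k-1)))`. -/
def permConcat {A : Type*} (V : ℕ → List A) {k : ℕ} (n : Fin k → ℕ)
    (σ : Equiv.Perm (Fin k)) : List A :=
  (List.ofFn fun t => V (n (σ t))).flatten

/-- The factorization `V` is `φ`-monochromatic. -/
def IsMonochromatic {A C : Type*} (φ : List A → C) (V : ℕ → List A) : Prop :=
  ∃ c : C, ∀ i, φ (V i) = c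

/-- The factorization `V` is `φ`-sequentially monochromatic. -/
def IsSeqMonochromatic {A C : Type*} (φ : List A → C) (V : ℕ → List A) : Prop :=
  ∃ c : C, ∀ i j : ℕ, φ (blockConcat V i j) = c

/-- The factorization `V` is `φ`-ultra monochromatic. -/
def IsUltraMonochromatic {A C : Type*} (φ : List A → C) (V : ℕ → List A) : Prop :=
  ∃ c : C, ∀ k : ℕ, 1 ≤ k → ∀ n : Fin k → ℕ, StrictMono n →
    ∀ σ : Equiv.Perm (Fin k), φ (permConcat V n σ) = c

/-!
Color a pair `m < n` of positions by the color of the factor of `x` from position `m` to position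
`n`. Ramsey's theorem gives an increasing sequence of positions all of whose pairs have the same
color; cutting `x` at these positions makes every concatenation of consecutive blocks that color.

Ramsey's theorem comes from an ultrafilter `u` tending to infinity: each `m` has a limit color,
the color of `(m, n)` for `u`-almost all `n`, and `u`-almost all `m` share the same limit color `c`.
Given finitely many points of limit color `c`, `u`-almost every `n` has limit color `c`, lies above
all of them and forms a pair of color `c` with each of them, so the sequence is built greedily.
-/

open Filter

theorem exists_eventually_eq_of_finite {α C : Type*} [Finite C] (u : Ultrafilter α) (f : α → C) :
    ∃ c, ∀ᶠ a in u, f a = c := by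
  obtain ⟨c, hc⟩ := (u.map f).eq_pure_of_finite
  have mem_map : {c} ∈ u.map f := hc ▸ Ultrafilter.mem_pure.mpr rfl
  exact ⟨c, mem_map⟩

theorem exists_strictMono_forall_lt_eq {α C : Type*} [Preorder α] [IsDirectedOrder α] [Nonempty α]
    [NoMaxOrder α] [Finite C] (col : α → α → C) :
    ∃ (c : C) (g : ℕ → α), StrictMono g ∧ ∀ m n, m < n → col (g m) (g n) = c := by
  let u : Ultrafilter α := Ultrafilter.of atTop
  choose limitColor hlimit using fun a => exists_eventually_eq_of_finite u (col a)
  obtain ⟨c, hc⟩ := exists_eventually_eq_of_finite u limitColor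
  have extend : ∀ s : Finset α, (∀ a ∈ s, limitColor a = c) →
      ∃ b, limitColor b = c ∧ ∀ a ∈ s, a < b ∧ col a b = c := by
    intro s hs
    have eventually_good : ∀ a ∈ s, ∀ᶠ b in u, a < b ∧ col a b = c := fun a ha =>
      ((eventually_gt_atTop a).filter_mono (Ultrafilter.of_le atTop)).and (hs a ha ▸ hlimit a)
    exact (hc.and ((eventually_all_finset s).mpr eventually_good)).exists
  obtain ⟨g, -, hg⟩ := exists_seq_of_forall_finset_exists _ _ extend
  exact ⟨c, g, fun m n hmn => (hg m n hmn).1, fun m n hmn => (hg m n hmn).2⟩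

/-- The factor `x m, x (m + 1), …, x (n - 1)` of the infinite word `x`, between the cut points `m`
and `n`; it is empty when `n ≤ m`. -/
def factorBetween {A : Type*} (x : ℕ → A) (m n : ℕ) : List A := (List.Ico m n).map x

section Cuts

variable {A : Type*} (x : ℕ → A)

theorem factorBetween_append {l m n : ℕ} (hlm : l ≤ m) (hmn : m ≤ n) :
    factorBetween x l m ++ factorBetween x m n = factorBetween x l n := by
  rw [factorBetween, factorBetween, ← List.map_append, List.Ico.append_consecutive hlm hmn,
    factorBetween]

theorem factorBetween_ne_nil {m n : ℕ} (hmn : m < n) : factorBetween x m n ≠ [] := by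
  simpa only [factorBetween, ne_eq, List.map_eq_nil_iff, List.Ico.eq_empty_iff, not_le] using hmn

theorem factorBetween_eq_wordTake (m n : ℕ) :
    factorBetween x m n = wordTake (fun k => x (m + k)) (n - m) := by
  rw [factorBetween, List.Ico, List.range'_eq_map_range, List.map_map, wordTake]
  rfl

theorem isPrefixOf_factorBetween (m n : ℕ) :
    IsPrefixOf (factorBetween x m n) (fun k => x (m + k)) := by
  rw [IsPrefixOf, factorBetween, List.length_map, List.Ico.length, ← factorBetween_eq_wordTake,
    factorBetween]

variable {g : ℕ → ℕ}

theorem flatten_map_factorBetween (hg : Monotone g) (n : ℕ) :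
    ((List.range n).map fun i => factorBetween x (g i) (g (i + 1))).flatten =
      factorBetween x (g 0) (g n) := by
  induction n with
  | zero => simp [factorBetween]
  | succ n ih =>
    rw [List.range_succ, List.map_append, List.flatten_append, ih, List.map_singleton,
      List.flatten_singleton, factorBetween_append x (hg n.zero_le) (hg n.le_succ)]

theorem isFactorization_factorBetween (hg : StrictMono g) :
    IsFactorization (fun k => x (g 0 + k)) (fun i => factorBetween x (g i) (g (i + 1))) := by
  refine ⟨fun i => factorBetween_ne_nil x (hg i.lt_succ_self), fun n => ?_⟩
  rw [flatten_map_factorBetween x hg.monotone]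
  exact isPrefixOf_factorBetween x (g 0) (g n)

theorem blockConcat_factorBetween (hg : Monotone g) (i j : ℕ) :
    blockConcat (fun i => factorBetween x (g i) (g (i + 1))) i j =
      factorBetween x (g i) (g (i + (j + 1))) :=
  flatten_map_factorBetween x (g := fun t => g (i + t))
    (fun _ _ hst => hg (Nat.add_le_add_left hst i)) (j + 1)

end Cuts

theorem IsSeqMonochromatic.isMonochromatic {A C : Type*} {φ : List A → C} {V : ℕ → List A}
    (hV : IsSeqMonochromatic φ V) : IsMonochromatic φ V := by
  obtain ⟨c, hc⟩ := hV
  exact ⟨c, fun i => by simpa [blockConcat] using hc i 0⟩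

theorem suffix_admits_monochromatic_factorization_general {A C : Type*} [Finite C]
    (φ : List A → C) (x : ℕ → A) :
    ∃ n : ℕ, ∃ V : ℕ → List A,
      IsFactorization (fun m => x (n + m)) V ∧ IsSeqMonochromatic φ V := by
  obtain ⟨c, g, hg, hc⟩ := exists_strictMono_forall_lt_eq fun m n => φ (factorBetween x m n)
  refine ⟨g 0, fun i => factorBetween x (g i) (g (i + 1)), isFactorization_factorBetween x hg,
    c, fun i j => ?_⟩
  rw [blockConcat_factorBetween x hg.monotone]
  exact hc i (i + (j + 1)) (Nat.lt_add_of_pos_right j.succ_pos)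

/-- Schützenberger: For every nonempty alphabet, every finite coloring, and
every infinite word `x`, some suffix of `x` admits a `φ`-monochromatic factorization. -/
theorem suffix_admits_monochromatic_factorization
    {A C : Type*} [Nonempty A] [Fintype C] [Nonempty C]
    (φ : List A → C) (x : ℕ → A) :
    ∃ n : ℕ, ∃ V : ℕ → List A,
      IsFactorization (fun m => x (n + m)) V ∧ IsMonochromatic φ V := by
  obtain ⟨n, V, hV, hφ⟩ := suffix_admits_monochromatic_factorization_general φ x
  exact ⟨n, V, hV, hφ.isMonochromatic⟩
end

section
/- Let C be a finite semigroup and φ : A⁺ → C a semigroup morphism (i.e., φ(uv) = φ(u)φ(v) for all nonempty words u, v). Then for every infinite word x over A there exists a suffix x' of x which admits a φ-ultra monochromatic factorization. -/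
/-!
Colour each pair of positions `a < b` of `x` by the `φ`-value of the factor of `x` between them.
By Ramsey's theorem some increasing sequence of positions `s` has all its pairs of the same
colour `c`. Cutting `x` at these positions gives blocks of value `c`, and comparing the first two
blocks with their concatenation gives `c * c = c`. Hence every product of blocks, in any order,
has value `c`.
-/

section Ramsey

variable {α β : Type*} [Finite β]

theorem exists_eventually_eq_const (U : Ultrafilter α) (g : α → β) :
    ∃ c, ∀ᶠ a in U, g a = c :=
  Ultrafilter.eventually_exists_iff.1 (.of_forall fun a => ⟨g a, rfl⟩)

/- Fix an ultrafilter `U` finer than `atTop`. Each `i` has a colour `limitColor i` such that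
`f i j = limitColor i` for `U`-most `j`, and `U`-most `i` share the same `limitColor i = c`; so
a finite set of points of limit colour `c` can always be extended by a larger one. -/
theorem exists_strictMono_forall_lt_eq_s3 [Preorder α] [IsDirectedOrder α] [NoMaxOrder α] [Nonempty α]
    (f : α → α → β) :
    ∃ c, ∃ s : ℕ → α, StrictMono s ∧ ∀ i j, i < j → f (s i) (s j) = c := by
  let U : Ultrafilter α := .of Filter.atTop
  choose limitColor hlimit using fun i => exists_eventually_eq_const U (f i)
  obtain ⟨c, hc⟩ := exists_eventually_eq_const U limitColor
  have extend (S : Finset α) (hS : ∀ i ∈ S, limitColor i = c) :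
      ∃ j, limitColor j = c ∧ ∀ i ∈ S, i < j ∧ f i j = c := by
    have hS_large : ∀ᶠ j in U, ∀ i ∈ S, i < j ∧ f i j = c := by
      refine (Filter.eventually_all_finset S).2 fun i hi => ?_
      have h_gt : ∀ᶠ j in U, i < j := Ultrafilter.of_le _ (Filter.eventually_gt_atTop i)
      exact h_gt.and (hS i hi ▸ hlimit i)
    exact (hc.and hS_large).exists
  obtain ⟨s, -, hs⟩ := exists_seq_of_forall_finset_exists _ _ extend
  exact ⟨c, s, fun i j hij => (hs i j hij).1, fun i j hij => (hs i j hij).2⟩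

end Ramsey

section WordFactor

variable {A : Type*} (x : ℕ → A)

/-- The factor `x_a x_{a+1} ⋯ x_{b-1}` of the infinite word `x` between the cut points `a` and `b`;
it is empty when `b ≤ a`. -/
def wordFactor (a b : ℕ) : List A := (List.Ico a b).map x

theorem wordFactor_self (a : ℕ) : wordFactor x a a = [] := by
  rw [wordFactor, List.Ico.self_empty, List.map_nil]

theorem wordFactor_ne_nil {a b : ℕ} (hab : a < b) : wordFactor x a b ≠ [] := by
  simpa [wordFactor] using hab

theorem wordFactor_append_wordFactor {a b c : ℕ} (hab : a ≤ b) (hbc : b ≤ c) :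
    wordFactor x a b ++ wordFactor x b c = wordFactor x a c := by
  rw [wordFactor, wordFactor, ← List.map_append, List.Ico.append_consecutive hab hbc, wordFactor]

theorem flatten_wordFactor {s : ℕ → ℕ} (hs : Monotone s) (n : ℕ) :
    ((List.range n).map fun i => wordFactor x (s i) (s (i + 1))).flatten =
      wordFactor x (s 0) (s n) := by
  induction n with
  | zero => simp [wordFactor_self]
  | succ n ih =>
    rw [List.range_succ, List.map_append, List.flatten_append, ih, List.map_singleton,
      List.flatten_singleton, wordFactor_append_wordFactor x (hs n.zero_le) (hs n.le_succ)]

theorem isPrefixOf_wordFactor (a b : ℕ) : IsPrefixOf (wordFactor x a b) fun m => x (a + m) := by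
  simp [IsPrefixOf, wordTake, wordFactor, List.Ico, List.range'_eq_map_range]

theorem isFactorization_wordFactor {s : ℕ → ℕ} (hs : StrictMono s) :
    IsFactorization (fun m => x (s 0 + m)) fun i => wordFactor x (s i) (s (i + 1)) :=
  ⟨fun i => wordFactor_ne_nil x (hs i.lt_succ_self),
    fun n => flatten_wordFactor x hs.monotone n ▸ isPrefixOf_wordFactor x (s 0) (s n)⟩

end WordFactor

section Morphism

variable {A C : Type*} [Mul C] {φ : List A → C}

theorem map_flatten_eq_of_isIdempotentElem
    (hφ : ∀ u v : List A, u ≠ [] → v ≠ [] → φ (u ++ v) = φ u * φ v)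
    {c : C} (hc : IsIdempotentElem c) {L : List (List A)} (hL : L ≠ [])
    (h_ne : ∀ u ∈ L, u ≠ []) (h_color : ∀ u ∈ L, φ u = c) : φ L.flatten = c := by
  induction L, hL using List.recNeNil with
  | singleton u => simpa using h_color
  | cons u L hL ih =>
    rw [List.forall_mem_cons] at h_ne h_color
    obtain ⟨v, hv⟩ := List.exists_mem_of_ne_nil L hL
    have h_flatten : L.flatten ≠ [] := List.flatten_ne_nil_iff.2 ⟨v, hv, h_ne.2 v hv⟩
    rw [List.flatten_cons, hφ u _ h_ne.1 h_flatten, h_color.1, ih h_ne.2 h_color.2, hc.eq]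

theorem isUltraMonochromatic_of_isIdempotentElem
    (hφ : ∀ u v : List A, u ≠ [] → v ≠ [] → φ (u ++ v) = φ u * φ v)
    {c : C} (hc : IsIdempotentElem c) {V : ℕ → List A}
    (h_ne : ∀ i, V i ≠ []) (h_color : ∀ i, φ (V i) = c) : IsUltraMonochromatic φ V := by
  refine ⟨c, fun k hk n _ σ => map_flatten_eq_of_isIdempotentElem hφ hc ?_ ?_ ?_⟩
  · simpa using Nat.one_le_iff_ne_zero.1 hk
  · exact List.forall_mem_ofFn_iff.2 fun t => h_ne _
  · exact List.forall_mem_ofFn_iff.2 fun t => h_color _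

theorem isIdempotentElem_of_forall_wordFactor_eq
    (hφ : ∀ u v : List A, u ≠ [] → v ≠ [] → φ (u ++ v) = φ u * φ v)
    {x : ℕ → A} {s : ℕ → ℕ} (hs : StrictMono s) {c : C}
    (hc : ∀ i j, i < j → φ (wordFactor x (s i) (s j)) = c) : IsIdempotentElem c := by
  have h01 : s 0 < s 1 := hs Nat.zero_lt_one
  have h12 : s 1 < s 2 := hs Nat.one_lt_two
  calc c * c = φ (wordFactor x (s 0) (s 1)) * φ (wordFactor x (s 1) (s 2)) := by
        rw [hc 0 1 Nat.zero_lt_one, hc 1 2 Nat.one_lt_two]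
    _ = φ (wordFactor x (s 0) (s 2)) := by
        rw [← hφ _ _ (wordFactor_ne_nil x h01) (wordFactor_ne_nil x h12),
          wordFactor_append_wordFactor x h01.le h12.le]
    _ = c := hc 0 2 Nat.zero_lt_two

theorem suffix_admits_ultra_monochromatic_of_morphism_general [Finite C]
    (hφ : ∀ u v : List A, u ≠ [] → v ≠ [] → φ (u ++ v) = φ u * φ v) (x : ℕ → A) :
    ∃ n : ℕ, ∃ V : ℕ → List A,
      IsFactorization (fun m => x (n + m)) V ∧ IsUltraMonochromatic φ V := by
  obtain ⟨c, s, hs, hc⟩ := exists_strictMono_forall_lt_eq_s3 fun a b => φ (wordFactor x a b)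
  have h_fact := isFactorization_wordFactor x hs
  have h_idem : IsIdempotentElem c := isIdempotentElem_of_forall_wordFactor_eq hφ hs hc
  exact ⟨s 0, _, h_fact, isUltraMonochromatic_of_isIdempotentElem hφ h_idem h_fact.1
    fun i => hc i (i + 1) i.lt_succ_self⟩

end Morphism

/-- If `C` is a finite semigroup and `φ : A⁺ → C` is a semigroup morphism,
then every infinite word over `A` has a suffix admitting a `φ`-ultra monochromatic
factorization. -/
theorem suffix_admits_ultra_monochromatic_of_morphism
    {A C : Type*} [Nonempty A] [Semigroup C] [Fintype C] [Nonempty C]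
    (φ : List A → C)
    (hφ : ∀ u v : List A, u ≠ [] → v ≠ [] → φ (u ++ v) = φ u * φ v)
    (x : ℕ → A) :
    ∃ n : ℕ, ∃ V : ℕ → List A,
      IsFactorization (fun m => x (n + m)) V ∧ IsUltraMonochromatic φ V :=
  suffix_admits_ultra_monochromatic_of_morphism_general hφ x
end

section
/- Let 𝕋 ∈ {0,1}^ℕ be the Thue–Morse word, defined by 𝕋_n = (sum of the binary digits of n) mod 2. Then there is no factorization 𝕋 = V₀V₁V₂⋯ in which every block V_i is a prefix of 𝕋 and all blocks V_i end with the same letter. Equivalently, 𝕋 admits no φ'-monochromatic factorization, where φ' : {0,1}⁺ → {0,1,2} is defined by φ'(u) = 0 if u is a prefix of 𝕋 ending with 0, φ'(u) = 1 if u is a prefix of 𝕋 ending with 1, and φ'(u) = 2 otherwise. -/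
/-- The Thue–Morse word: `thueMorse n` is the sum mod 2 of the binary digits of `n`
(`false` codes the letter 0 and `true` the letter 1). -/
def thueMorse (n : ℕ) : Bool := (Nat.digits 2 n).sum % 2 == 1

/-!
Call the end positions of the blocks cuts. At every cut the word restarts as `𝕋`, and the letter
just before every cut is `a`. The recurrences `𝕋 (2n) = 𝕋 n` and `𝕋 (2n + 1) = ¬ 𝕋 n` force all cuts
to be even. If `a` is `0`, an odd cut would put `00` at an even position. If `a` is `1`, the block
after an odd cut must be `01`, so three consecutive cuts are `2p + 1`, `2p + 3`, `2p + 5`; the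
letters before them give `111` in `𝕋` at position `p`, which is impossible. Halving replaces `a` by
its complement and otherwise preserves the situation: an infinite descent on the first cut. Nothing
here depends on where the first block starts, so the argument applies to every suffix of `𝕋`.
-/

section Words

variable {A : Type*} {x : ℕ → A}

theorem IsPrefixOf.getElem_eq {u : List A} (hu : IsPrefixOf u x) {k : ℕ} (hk : k < u.length) :
    u[k] = x k := by
  have hget : u[k]? = (wordTake x u.length)[k]? := congrArg (·[k]?) hu
  simpa [wordTake, hk] using hget

/-- The position at which the block `V i` starts in the concatenation `V 0 ++ V 1 ++ ⋯`; these are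
the cut points `nᵢ` of the factorization. -/
def cutPoint (V : ℕ → List A) (i : ℕ) : ℕ := ((List.range i).map V).flatten.length

theorem cutPoint_succ (V : ℕ → List A) (i : ℕ) :
    cutPoint V (i + 1) = cutPoint V i + (V i).length := by
  simp [cutPoint, List.range_succ]

namespace IsFactorization

variable {V : ℕ → List A}

theorem length_pos (hV : IsFactorization x V) (i : ℕ) : 0 < (V i).length :=
  List.length_pos_iff.mpr (hV.1 i)

theorem strictMono_cutPoint (hV : IsFactorization x V) : StrictMono (cutPoint V) :=
  strictMono_nat_of_lt_succ fun i => by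
    rw [cutPoint_succ]
    exact Nat.lt_add_of_pos_right (hV.length_pos i)

theorem getElem_eq (hV : IsFactorization x V) {i k : ℕ} (hk : k < (V i).length) :
    (V i)[k] = x (cutPoint V i + k) := by
  have hlt : cutPoint V i + k < cutPoint V (i + 1) := by
    rw [cutPoint_succ]
    exact Nat.add_lt_add_left hk _
  rw [← (hV.2 (i + 1)).getElem_eq hlt]
  simp [cutPoint, List.range_succ]

end IsFactorization

/-- The sequence `c` marks the ends of blocks that are prefixes of `x` and have last letter `a`:
between consecutive cuts one reads a prefix of `x`, and each cut is preceded by `a`. The block that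
ends at `c 0` is constrained only through its last letter, so that this notion applies to
factorizations of arbitrary suffixes of `x`. -/
structure IsPrefixalCutSeq (x : ℕ → A) (a : A) (c : ℕ → ℕ) : Prop where
  pos : 0 < c 0
  strictMono : StrictMono c
  apply_add : ∀ i k, c i + k < c (i + 1) → x (c i + k) = x k
  apply_sub_one : ∀ i, x (c i - 1) = a

theorem IsFactorization.isPrefixalCutSeq {V : ℕ → List A} {s : ℕ} {a : A}
    (hV : IsFactorization (fun n => x (s + n)) V) (hprefix : ∀ i, IsPrefixOf (V i) x)
    (hlast : ∀ i, (V i).getLast? = some a) :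
    IsPrefixalCutSeq x a fun i => s + cutPoint V (i + 1) where
  pos := Nat.add_pos_right s ((Nat.zero_le _).trans_lt (hV.strictMono_cutPoint Nat.zero_lt_one))
  strictMono _ _ hij := Nat.add_lt_add_left (hV.strictMono_cutPoint (Nat.succ_lt_succ hij)) s
  apply_add i k hk := by
    have hk' : k < (V (i + 1)).length := by
      rw [cutPoint_succ V (i + 1)] at hk
      omega
    rw [Nat.add_assoc, ← hV.getElem_eq hk', (hprefix (i + 1)).getElem_eq hk']
  apply_sub_one i := by
    have hpos := hV.length_pos i
    have hlt : (V i).length - 1 < (V i).length := Nat.sub_one_lt_of_lt hpos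
    have hget : (V i)[(V i).length - 1] = a := by
      simpa [List.getLast?_eq_getElem?, hlt] using hlast i
    rw [cutPoint_succ, ← Nat.add_assoc, Nat.add_sub_assoc hpos, Nat.add_assoc,
      ← hV.getElem_eq hlt, hget]

theorem IsPrefixalCutSeq.apply_cut {a : A} {c : ℕ → ℕ} (hc : IsPrefixalCutSeq x a c) (i : ℕ) :
    x (c i) = x 0 :=
  hc.apply_add i 0 (hc.strictMono i.lt_succ_self)

end Words

section ThueMorse

theorem thueMorse_two_mul (n : ℕ) : thueMorse (2 * n) = thueMorse n := by
  rcases n.eq_zero_or_pos with rfl | hn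
  · rfl
  · simp [thueMorse, Nat.digits_base_mul one_lt_two hn]

theorem thueMorse_two_mul_add_one (n : ℕ) : thueMorse (2 * n + 1) = !thueMorse n := by
  have hdigits : Nat.digits 2 (2 * n + 1) = 1 :: Nat.digits 2 n := by
    rw [Nat.add_comm]
    exact Nat.digits_add 2 one_lt_two 1 n one_lt_two (.inl one_ne_zero)
  rw [thueMorse, thueMorse, hdigits, List.sum_cons]
  rcases Nat.mod_two_eq_zero_or_one (Nat.digits 2 n).sum with h | h <;> simp [Nat.add_mod, h]

theorem thueMorse_zero : thueMorse 0 = false := by simp [thueMorse]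

theorem thueMorse_one : thueMorse 1 = true := by simp [thueMorse]

theorem thueMorse_two : thueMorse 2 = true := by simp [thueMorse]

theorem thueMorse_two_mul_add_one_ne (n : ℕ) : thueMorse (2 * n + 1) ≠ thueMorse (2 * n) := by
  simp [thueMorse_two_mul_add_one, thueMorse_two_mul]

theorem thueMorse_no_letter_cube (n : ℕ) :
    ¬ (thueMorse (n + 1) = thueMorse n ∧ thueMorse (n + 2) = thueMorse (n + 1)) := by
  rintro ⟨h₁, h₂⟩
  rcases n.even_or_odd' with ⟨m, rfl | rfl⟩
  · exact thueMorse_two_mul_add_one_ne m h₁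
  · exact thueMorse_two_mul_add_one_ne (m + 1) h₂

namespace IsPrefixalCutSeq

variable {a : Bool} {c : ℕ → ℕ}

theorem thueMorse_half_of_odd (hc : IsPrefixalCutSeq thueMorse a c) {i p : ℕ}
    (hp : c i = 2 * p + 1) : thueMorse p = a := by
  rw [← thueMorse_two_mul, ← hc.apply_sub_one i, hp, Nat.add_sub_cancel]

theorem even_of_last_false (hc : IsPrefixalCutSeq thueMorse false c) (i : ℕ) : Even (c i) := by
  rcases (c i).even_or_odd with heven | ⟨p, hp⟩
  · exact heven
  · have hcut : thueMorse (2 * p + 1) = false := by rw [← hp, hc.apply_cut, thueMorse_zero]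
    simp [thueMorse_two_mul_add_one, hc.thueMorse_half_of_odd hp] at hcut

theorem succ_eq_add_two_of_odd (hc : IsPrefixalCutSeq thueMorse true c) {i : ℕ}
    (hodd : Odd (c i)) : c (i + 1) = c i + 2 := by
  obtain ⟨p, hp⟩ := hodd
  have hlt : c i < c (i + 1) := hc.strictMono i.lt_succ_self
  have hne_one : c (i + 1) ≠ c i + 1 := by
    intro h
    have hlast := hc.apply_sub_one (i + 1)
    rw [h, Nat.add_sub_cancel, hc.apply_cut, thueMorse_zero] at hlast
    exact Bool.false_ne_true hlast
  have hle_two : c (i + 1) ≤ c i + 2 := by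
    by_contra! h
    have h₁ : thueMorse (2 * (p + 1)) = true := by
      rw [← thueMorse_one, ← hc.apply_add i 1 (by omega), hp]
      rfl
    have h₂ : thueMorse (2 * (p + 1) + 1) = true := by
      rw [← thueMorse_two, ← hc.apply_add i 2 h, hp]
      rfl
    exact thueMorse_two_mul_add_one_ne (p + 1) (h₂.trans h₁.symm)
  omega

theorem even_of_last_true (hc : IsPrefixalCutSeq thueMorse true c) (i : ℕ) : Even (c i) := by
  rcases (c i).even_or_odd with heven | hodd
  · exact heven
  · obtain ⟨p, hp⟩ := hodd
    have hp₁ : c (i + 1) = 2 * (p + 1) + 1 := by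
      rw [hc.succ_eq_add_two_of_odd ⟨p, hp⟩, hp]
      ring
    have hp₂ : c (i + 2) = 2 * (p + 2) + 1 := by
      rw [hc.succ_eq_add_two_of_odd ⟨p + 1, hp₁⟩, hp₁]
      ring
    have h := hc.thueMorse_half_of_odd hp
    have h₁ := hc.thueMorse_half_of_odd hp₁
    have h₂ := hc.thueMorse_half_of_odd hp₂
    exact (thueMorse_no_letter_cube p ⟨h₁.trans h.symm, h₂.trans h₁.symm⟩).elim

theorem even (hc : IsPrefixalCutSeq thueMorse a c) (i : ℕ) : Even (c i) := by
  cases a with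
  | false => exact hc.even_of_last_false i
  | true => exact hc.even_of_last_true i

theorem exists_half (hc : IsPrefixalCutSeq thueMorse a c) :
    ∃ d : ℕ → ℕ, (∀ i, c i = 2 * d i) ∧ IsPrefixalCutSeq thueMorse (!a) d := by
  choose d hd using fun i => (hc.even i).two_dvd
  have hpos : 0 < d 0 := by
    have := hc.pos
    rw [hd] at this
    omega
  have hmono : StrictMono d := fun i j hij => by
    have := hc.strictMono hij
    rw [hd, hd] at this
    omega
  refine ⟨d, hd, hpos, hmono, fun i k hk => ?_, fun i => ?_⟩
  · have h := hc.apply_add i (2 * k) (by rw [hd, hd]; omega)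
    rwa [hd, ← Nat.mul_add, thueMorse_two_mul, thueMorse_two_mul] at h
  · have hdi : 0 < d i := hpos.trans_le (hmono.monotone i.zero_le)
    have hodd : c i - 1 = 2 * (d i - 1) + 1 := by
      rw [hd]
      omega
    rw [← hc.apply_sub_one i, hodd, thueMorse_two_mul_add_one, Bool.not_not]

end IsPrefixalCutSeq

theorem not_isPrefixalCutSeq_thueMorse (a : Bool) (c : ℕ → ℕ) :
    ¬ IsPrefixalCutSeq thueMorse a c := by
  induction hN : c 0 using Nat.strong_induction_on generalizing a c with
  | _ N ih =>
    intro hc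
    obtain ⟨d, hd, hdcut⟩ := hc.exists_half
    have hlt : d 0 < N := by
      have := hd 0
      have := hdcut.pos
      omega
    exact ih (d 0) hlt (!a) d rfl hdcut

end ThueMorse

theorem thueMorse_no_prefixal_same_last_letter_factorization_general (s : ℕ) :
    ¬ ∃ V : ℕ → List Bool, IsFactorization (fun n => thueMorse (s + n)) V ∧
      (∀ i, IsPrefixOf (V i) thueMorse) ∧
      ∃ a : Bool, ∀ i, (V i).getLast? = some a := by
  rintro ⟨V, hV, hprefix, a, hlast⟩
  exact not_isPrefixalCutSeq_thueMorse a _ (hV.isPrefixalCutSeq hprefix hlast)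

/-- The Thue–Morse word has no factorization in which every block is a
prefix of it and all blocks end with the same letter. -/
theorem thueMorse_no_prefixal_same_last_letter_factorization :
    ¬ ∃ V : ℕ → List Bool, IsFactorization thueMorse V ∧
      (∀ i, IsPrefixOf (V i) thueMorse) ∧
      ∃ a : Bool, ∀ i, (V i).getLast? = some a := by
  simpa only [Nat.zero_add] using
    thueMorse_no_prefixal_same_last_letter_factorization_general 0
end

section
/- Let x ∈ {0,1}^ℕ be the infinite word x = 010110111011110⋯, the concatenation of the blocks 01ⁿ (a 0 followed by n 1's) for n = 1, 2, 3, …. Then for every finite coloring φ : {0,1}⁺ → C there exists a suffix x' of x which admits a φ-conditionally monochromatic factorization. -/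
open scoped Classical in
/-- The infinite word `x = 010110111011110⋯`, the concatenation of the blocks `01ⁿ` for
`n = 1, 2, 3, …` (`false` codes 0, `true` codes 1): position `m` carries the letter `0`
exactly when `m = k(k+3)/2` for some `k ≥ 0`. -/
noncomputable def wordX (m : ℕ) : Bool :=
  if ∃ k : ℕ, 2 * m = k * (k + 3) then false else true
/-- The factorization `V` of the infinite word `x` is `φ`-conditionally monochromatic:
every permuted concatenation of finitely many blocks either is not a factor of `x` or
has the color `c`. -/
def IsCondMonochromatic {A C : Type*} (x : ℕ → A) (φ : List A → C)
    (V : ℕ → List A) : Prop :=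
  ∃ c : C, ∀ k : ℕ, 1 ≤ k → ∀ n : Fin k → ℕ, StrictMono n → ∀ σ : Equiv.Perm (Fin k),
    ¬ IsFactorOf (permConcat V n σ) x ∨ φ (permConcat V n σ) = c

/-!
Two consecutive zeros of `x` bound a run of ones whose length determines its position, so every
suffix of `x` has a prefix that occurs only once in `x`. Ramsey's theorem for pairs gives cut points
`a 0 < a 1 < ⋯`, as sparse as we like, such that all the words `x_{a m} ⋯ x_{a n - 1}` with `m < n`
have the same color. When the blocks between consecutive cuts are long enough to occur only once, a
product of blocks can be a factor of `x` only if the blocks are consecutive in their natural order,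
and such a product is one of the words colored by Ramsey's theorem.
-/

open Filter

section Ramsey

variable {α C : Type*} [Finite C]

lemma exists_eventually_eq (U : Ultrafilter α) (f : α → C) : ∃ c, ∀ᶠ i in (U : Filter α), f i = c :=
  U.eventually_exists_iff.1 (.of_forall fun i => ⟨f i, rfl⟩)

lemma exists_seq_pairs_eq (l : Filter α) [l.NeBot] {r : α → α → Prop}
    (hr : ∀ i, ∀ᶠ j in l, r i j) (f : α → α → C) :
    ∃ c, ∃ a : ℕ → α, ∀ m n, m < n → r (a m) (a n) ∧ f (a m) (a n) = c := by
  let U := Ultrafilter.of l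
  choose limitColor hlimit using fun i => exists_eventually_eq U (f i)
  obtain ⟨c, hc⟩ := exists_eventually_eq U limitColor
  obtain ⟨a, -, ha⟩ := exists_seq_of_forall_finset_exists (limitColor · = c)
    (fun i j => r i j ∧ f i j = c) fun s hs => by
      have hs' : ∀ᶠ j in (U : Filter α), ∀ i ∈ s, r i j ∧ f i j = c :=
        (eventually_all_finset s).2 fun i hi =>
          ((hr i).filter_mono (Ultrafilter.of_le l)).and (hs i hi ▸ hlimit i)
      exact (hc.and hs').exists
  exact ⟨c, a, ha⟩

end Ramsey

section Subword

variable {A : Type*} {x : ℕ → A}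

/-- The finite word `x_p x_{p+1} ⋯ x_{q-1}`, empty if `q ≤ p`: the factor of the infinite word `x`
between the cut points `p` and `q`. -/
def subword (x : ℕ → A) (p q : ℕ) : List A := (List.Ico p q).map x

@[simp]
lemma length_subword (x : ℕ → A) (p q : ℕ) : (subword x p q).length = q - p := by
  simp [subword]

lemma subword_append_subword (x : ℕ → A) {p q r : ℕ} (hpq : p ≤ q) (hqr : q ≤ r) :
    subword x p q ++ subword x q r = subword x p r := by
  rw [subword, subword, ← List.map_append, List.Ico.append_consecutive hpq hqr, subword]

lemma subword_add_right (x : ℕ → A) (p n : ℕ) :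
    subword x p (p + n) = wordTake (fun m => x (p + m)) n := by
  simp [subword, wordTake, List.Ico, List.range'_eq_map_range, Function.comp_def]

lemma subword_prefix_subword (x : ℕ → A) (p : ℕ) {q r : ℕ} (hqr : q ≤ r) :
    subword x p q <+: subword x p r := by
  rcases le_total p q with hpq | hqp
  · exact ⟨_, subword_append_subword x hpq hqr⟩
  · simp [subword, List.Ico.eq_nil_of_le hqp]

lemma eq_subword_of_append_eq_subword {u v : List A} {p r : ℕ} (h : u ++ v = subword x p r) :
    u = subword x p (p + u.length) ∧ v = subword x (p + u.length) r := by
  have hlen : u.length + v.length = r - p := by simpa using congrArg List.length h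
  rcases le_total p r with hpr | hrp
  · rw [← subword_append_subword x (Nat.le_add_right p u.length) (by omega)] at h
    exact List.append_inj h (by simp)
  · obtain ⟨hu, hv⟩ : u = [] ∧ v = [] := by
      simpa [subword, List.Ico.eq_nil_of_le hrp] using h
    simp [hu, hv, subword, List.Ico.eq_nil_of_le hrp]

lemma apply_add_eq_of_subword_eq {p q r s t : ℕ} (h : subword x q s = subword x p r)
    (ht : p + t < r) : x (q + t) = x (p + t) := by
  have hlen : s - q = r - p := by simpa using congrArg List.length h
  have hget := congrArg (·[t]?) h
  rwa [subword, subword, List.Ico, List.Ico, List.getElem?_map, List.getElem?_map,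
    List.getElem?_range' (by omega), List.getElem?_range' (by omega), one_mul, Option.map_some,
    Option.map_some, Option.some_inj] at hget

lemma IsFactorOf.exists_eq_subword {u : List A} (hu : IsFactorOf u x) :
    ∃ p, u = subword x p (p + u.length) := by
  obtain ⟨-, p, hp⟩ := hu
  exact ⟨p, hp.trans (subword_add_right x p _).symm⟩

end Subword

section Shift

variable {A C : Type*} {x : ℕ → A} {n : ℕ}

lemma IsFactorOf.of_shift {u : List A} (hu : IsFactorOf u fun m => x (n + m)) : IsFactorOf u x := by
  obtain ⟨hne, i, hi⟩ := hu
  exact ⟨hne, n + i, by simpa only [add_assoc] using hi⟩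

lemma IsCondMonochromatic.shift {φ : List A → C} {V : ℕ → List A}
    (hV : IsCondMonochromatic x φ V) : IsCondMonochromatic (fun m => x (n + m)) φ V := by
  obtain ⟨c, hc⟩ := hV
  exact ⟨c, fun k hk i hi σ => (hc k hk i hi σ).imp_left (mt .of_shift)⟩

end Shift

section OccursOnlyAt

variable {A : Type*} {x : ℕ → A}

/-- The word `u` has no occurrence in `x` at a position other than `p`. That it does occur at `p`
is not part of the definition. -/
def OccursOnlyAt (x : ℕ → A) (u : List A) (p : ℕ) : Prop :=
  ∀ q s, subword x q s = u → q = p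

lemma OccursOnlyAt.mono {u v : List A} {p : ℕ} (hu : OccursOnlyAt x u p) (huv : u <+: v) :
    OccursOnlyAt x v p := by
  rintro q s rfl
  obtain ⟨w, hw⟩ := huv
  exact hu q _ (eq_subword_of_append_eq_subword hw).1.symm

end OccursOnlyAt

section CutBlock

variable {A C : Type*} {x : ℕ → A} {a : ℕ → ℕ}

/-- The `i`-th block of the factorization of a suffix of `x` with cut points
`a 0 < a 1 < a 2 < ⋯`, where the cut points are positions in `x` itself. -/
def cutBlock (x : ℕ → A) (a : ℕ → ℕ) (i : ℕ) : List A := subword x (a i) (a (i + 1))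

lemma flatten_map_cutBlock_range (x : ℕ → A) (ha : Monotone a) (n : ℕ) :
    ((List.range n).map (cutBlock x a)).flatten = subword x (a 0) (a n) := by
  induction n with
  | zero => simp [subword]
  | succ n ih =>
    rw [List.range_succ, List.map_append, List.flatten_append, ih, List.map_singleton,
      List.flatten_singleton, cutBlock,
      subword_append_subword x (ha n.zero_le) (ha n.le_succ)]

lemma isFactorization_cutBlock (x : ℕ → A) (ha : StrictMono a) :
    IsFactorization (fun m => x (a 0 + m)) (cutBlock x a) := by
  refine ⟨fun i => ?_, fun n => ?_⟩
  · rw [← List.length_pos_iff, cutBlock, length_subword]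
    exact Nat.sub_pos_of_lt (ha i.lt_succ_self)
  · rw [IsPrefixOf, flatten_map_cutBlock_range x ha.monotone, length_subword, ← subword_add_right,
      Nat.add_sub_cancel' (ha.monotone n.zero_le)]

lemma exists_cut_of_flatten_map_cutBlock_eq (ha : StrictMono a)
    (honce : ∀ i, OccursOnlyAt x (cutBlock x a i) (a i)) {l : List ℕ} {i p r : ℕ}
    (h : ((i :: l).map (cutBlock x a)).flatten = subword x p r) :
    p = a i ∧ ∃ n, i < n ∧ r = a n := by
  induction l generalizing i p with
  | nil =>
    have hblock : cutBlock x a i = subword x p r := by simpa using h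
    obtain rfl := honce i p r hblock.symm
    have hlen : a (i + 1) - a i = r - a i := by
      simpa [cutBlock] using congrArg List.length hblock
    have hlt : a i < a (i + 1) := ha i.lt_succ_self
    exact ⟨rfl, i + 1, i.lt_succ_self, by omega⟩
  | cons j l ih =>
    rw [List.map_cons, List.flatten_cons] at h
    obtain ⟨hfirst, hrest⟩ := eq_subword_of_append_eq_subword h
    obtain rfl := honce i p _ hfirst.symm
    rw [cutBlock, length_subword, Nat.add_sub_cancel' (ha i.lt_succ_self).le] at hrest
    obtain ⟨hij, n, hjn, rfl⟩ := ih hrest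
    obtain rfl := ha.injective hij
    exact ⟨rfl, n, i.lt_succ_self.trans hjn, rfl⟩

lemma permConcat_eq_flatten_map (V : ℕ → List A) {k : ℕ} (n : Fin k → ℕ) (σ : Equiv.Perm (Fin k)) :
    permConcat V n σ = ((List.ofFn (n ∘ σ)).map V).flatten := by
  rw [permConcat, List.map_ofFn]
  rfl

lemma isCondMonochromatic_cutBlock (ha : StrictMono a)
    (honce : ∀ i, OccursOnlyAt x (cutBlock x a i) (a i)) {φ : List A → C} {c : C}
    (hφ : ∀ m n, m < n → φ (subword x (a m) (a n)) = c) :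
    IsCondMonochromatic x φ (cutBlock x a) := by
  refine ⟨c, fun k hk n _ σ => or_iff_not_imp_left.2 fun hfactor => ?_⟩
  obtain ⟨p, hp⟩ := (not_not.1 hfactor).exists_eq_subword
  obtain ⟨k, rfl⟩ := Nat.exists_eq_add_of_le' hk
  obtain ⟨hstart, j, hij, hend⟩ := exists_cut_of_flatten_map_cutBlock_eq ha honce
    (l := List.ofFn fun t : Fin k => n (σ t.succ)) (i := n (σ 0)) <| by
      rw [← hp, permConcat_eq_flatten_map, List.ofFn_succ]
      rfl
  rw [hp, hend, hstart]
  exact hφ _ _ hij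

end CutBlock

theorem wordX_suffix_admits_conditionally_monochromatic_general
    {A C : Type*} [Finite C] {x : ℕ → A} (hx : ∀ p, ∃ r, OccursOnlyAt x (subword x p r) p)
    (φ : List A → C) :
    ∃ n : ℕ, ∃ V : ℕ → List A,
      IsFactorization (fun m => x (n + m)) V ∧ IsCondMonochromatic x φ V := by
  choose window hwindow using hx
  obtain ⟨c, a, ha⟩ := exists_seq_pairs_eq atTop (r := fun i j => i < j ∧ window i ≤ j)
    (fun i => (eventually_gt_atTop i).and (eventually_ge_atTop (window i)))
    (fun i j => φ (subword x i j))
  have hmono : StrictMono a := fun m n h => (ha m n h).1.1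
  have honce (i : ℕ) : OccursOnlyAt x (cutBlock x a i) (a i) :=
    (hwindow (a i)).mono (subword_prefix_subword x _ (ha i (i + 1) i.lt_succ_self).1.2)
  exact ⟨a 0, cutBlock x a, isFactorization_cutBlock x hmono,
    isCondMonochromatic_cutBlock hmono honce fun m n h => (ha m n h).2⟩

section WordX

/-- The position in `wordX` of the zero that starts the block `01ᵏ⁺¹`. -/
def zeroPos (k : ℕ) : ℕ := k * (k + 3) / 2

lemma two_mul_zeroPos (k : ℕ) : 2 * zeroPos k = k * (k + 3) :=
  Nat.mul_div_cancel' (even_iff_two_dvd.1 (by grind))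

lemma zeroPos_succ (k : ℕ) : zeroPos (k + 1) = zeroPos k + (k + 2) := by
  linarith [two_mul_zeroPos k, two_mul_zeroPos (k + 1)]

lemma zeroPos_strictMono : StrictMono zeroPos :=
  strictMono_nat_of_lt_succ fun k => by rw [zeroPos_succ]; omega

lemma wordX_eq_false_iff {m : ℕ} : wordX m = false ↔ ∃ k, zeroPos k = m := by
  simp only [wordX, ite_eq_left_iff, reduceCtorEq, imp_false, not_not, ← two_mul_zeroPos,
    Nat.mul_right_inj two_ne_zero, eq_comm (a := m)]

lemma wordX_zeroPos (k : ℕ) : wordX (zeroPos k) = false := wordX_eq_false_iff.2 ⟨k, rfl⟩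

lemma add_two_le_of_wordX_zeroPos_add_eq_false {k t : ℕ} (ht : 0 < t)
    (h : wordX (zeroPos k + t) = false) : k + 2 ≤ t := by
  obtain ⟨j, hj⟩ := wordX_eq_false_iff.1 h
  have hkj : k < j := zeroPos_strictMono.lt_iff_lt.1 (by omega)
  have hle : zeroPos (k + 1) ≤ zeroPos j := zeroPos_strictMono.monotone hkj
  rw [zeroPos_succ] at hle
  omega

lemma eq_of_wordX_zeroPos_add_eq {k m : ℕ}
    (h : ∀ t ≤ k + 2, wordX (zeroPos m + t) = wordX (zeroPos k + t)) : m = k := by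
  have hmk : m + 2 ≤ k + 2 := add_two_le_of_wordX_zeroPos_add_eq_false (by omega) <| by
    rw [h _ le_rfl, ← zeroPos_succ, wordX_zeroPos]
  have hkm : k + 2 ≤ m + 2 := add_two_le_of_wordX_zeroPos_add_eq_false (by omega) <| by
    rw [← h _ hmk, ← zeroPos_succ, wordX_zeroPos]
  omega

lemma occursOnlyAt_subword_wordX {p k r : ℕ} (hp : p ≤ zeroPos k) (hr : zeroPos (k + 1) < r) :
    OccursOnlyAt wordX (subword wordX p r) p := by
  intro q s h
  rw [zeroPos_succ] at hr
  obtain ⟨d, hd⟩ := Nat.exists_eq_add_of_le hp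
  have hletters (t : ℕ) (ht : t ≤ k + 2) : wordX (q + d + t) = wordX (zeroPos k + t) := by
    rw [hd, add_assoc, add_assoc]
    exact apply_add_eq_of_subword_eq h (by omega)
  obtain ⟨m, hm⟩ := wordX_eq_false_iff.1 ((hletters 0 (by omega)).trans (wordX_zeroPos k))
  rw [add_zero] at hm
  obtain rfl : m = k := eq_of_wordX_zeroPos_add_eq (hm ▸ hletters)
  omega

lemma exists_occursOnlyAt_subword_wordX (p : ℕ) :
    ∃ r, OccursOnlyAt wordX (subword wordX p r) p :=
  ⟨_, occursOnlyAt_subword_wordX zeroPos_strictMono.le_apply (Nat.lt_succ_self _)⟩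

end WordX

/-- For `x = 010110111011110⋯` and every finite coloring `φ`, some suffix
of `x` admits a `φ`-conditionally monochromatic factorization. -/
theorem wordX_suffix_admits_conditionally_monochromatic
    {C : Type*} [Fintype C] [Nonempty C] (φ : List Bool → C) :
    ∃ n : ℕ, ∃ V : ℕ → List Bool,
      IsFactorization (fun m => wordX (n + m)) V ∧
      IsCondMonochromatic (fun m => wordX (n + m)) φ V := by
  obtain ⟨n, V, hV, hφ⟩ := wordX_suffix_admits_conditionally_monochromatic_general
    exists_occursOnlyAt_subword_wordX φ
  exact ⟨n, V, hV, hφ.shift⟩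
end
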